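/- Let X be an implicative-orthomodular algebra and let F ⊆ X. The following are equivalent: (a) F is a deductive system of X; (b) F is nonempty, satisfies (F₁) x, y ∈ F implies x ⊙ y ∈ F, and (F₄) x ∈ F, y ∈ X, x ≤ y imply y ∈ F; (c) F is nonempty, satisfies (F₁), and (F₅) x ∈ F and y ∈ X imply x ∪ y ∈ F. -/

import Mathlib

/-!
Everything rests on two consequences of the exchange law: `x ≤ (x → y) → y` and, since `*` is
an involution, the contrapositive law `x → y = y* → x*`. The latter turns `y → (x ⊙ y)` into
`(x → y*) → y*` and `(x ⊙ (x → y)) → y` into `x → ((x → y) → y)`, so that `x ≤ y → (x ⊙ y)` and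
`x ⊙ (x → y) ≤ y`. The first inequality gives closure of a deductive system under `⊙`, the second
recovers modus ponens from closure under `⊙` and upward closure. Finally, upward closure
and closure under `x ↦ x ∪ y` are equivalent for any set, because `x ≤ x ∪ y`
always holds and `x ∪ y = 1 → y = y` whenever `x ≤ y`.
-/

/-- An involutive BE algebra `(X, →, 0, 1)`. -/
structure InvBE (X : Type*) where
  imp : X → X → X
  one : X
  zero : X
  imp_self : ∀ x, imp x x = one
  imp_one : ∀ x, imp x one = one
  one_imp : ∀ x, imp one x = x
  exchange : ∀ x y z, imp x (imp y z) = imp y (imp x z)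
  zero_imp : ∀ x, imp zero x = one
  imp_involutive : ∀ x, imp (imp x zero) zero = x

namespace InvBE

variable {X : Type*} (A : InvBE X)

/-- `x* := x → 0`. -/
def neg (x : X) : X := A.imp x A.zero

/-- `x ⊓ y := ((x* → y*) → y*)*`. -/
def inf (x y : X) : X := A.neg (A.imp (A.imp (A.neg x) (A.neg y)) (A.neg y))

/-- `x ∪ y := (x → y) → y`. -/
def sup (x y : X) : X := A.imp (A.imp x y) y

/-- `x ⊙ y := (x → y*)*`. -/
def odot (x y : X) : X := A.neg (A.imp x (A.neg y))

/-- `x ⊕ y := (x* ⊙ y*)*`. -/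
def oplus (x y : X) : X := A.neg (A.odot (A.neg x) (A.neg y))

/-- `x ≤_Q y` iff `x = x ⊓ y`. -/
def leQ (x y : X) : Prop := x = A.inf x y

/-- `x ≤ y` iff `x → y = 1`. -/
def le (x y : X) : Prop := A.imp x y = A.one

/-- (IOM): `x ⊓ (y → x) = x` for all `x, y`. -/
def IOM : Prop := ∀ x y, A.inf x (A.imp y x) = x

/-- (QW): `x → ((x ⊓ y) ⊓ (z ⊓ x)) = (x → y) ⊓ (x → z)` for all `x, y, z`. -/
def QW : Prop :=
  ∀ x y z, A.imp x (A.inf (A.inf x y) (A.inf z x)) = A.inf (A.imp x y) (A.imp x z)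

/-- A filter: nonempty, closed under `⊙`, upward closed for `≤_Q`. -/
def IsFilter (F : Set X) : Prop :=
  F.Nonempty ∧ (∀ x ∈ F, ∀ y ∈ F, A.odot x y ∈ F) ∧
    (∀ x ∈ F, ∀ y : X, A.leQ x y → y ∈ F)

/-- A deductive system: contains `1` and is closed under modus ponens. -/
def IsDS (F : Set X) : Prop :=
  A.one ∈ F ∧ ∀ x y : X, x ∈ F → A.imp x y ∈ F → y ∈ F

/-- `pow x n` is the `⊙`-product of `n + 1` copies of `x`, i.e. `x^(n+1)`. -/
def pow (x : X) : ℕ → X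
  | 0 => x
  | n + 1 => A.odot x (pow x n)

/-- A maximal filter: proper and not contained in any other proper filter. -/
def IsMaximalFilter (F : Set X) : Prop :=
  A.IsFilter F ∧ F ≠ Set.univ ∧
    ∀ G : Set X, A.IsFilter G → F ⊆ G → G ≠ Set.univ → G = F

/-- A strongly maximal filter: for every `x ∉ F` there is `n ≥ 1` with `(xⁿ)* ∈ F`. -/
def IsStronglyMaximalFilter (F : Set X) : Prop :=
  A.IsFilter F ∧ ∀ x : X, x ∉ F → ∃ n : ℕ, A.neg (A.pow x n) ∈ F

/-- `x ≡_F y` iff there is `f` with `x, y ≤_Q f` and `f → x, f → y ∈ F`. -/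
def cong (F : Set X) (x y : X) : Prop :=
  ∃ f : X, A.leQ x f ∧ A.leQ y f ∧ A.imp f x ∈ F ∧ A.imp f y ∈ F

end InvBE

namespace InvBE

variable {X : Type*} (A : InvBE X)

lemma neg_neg' (x : X) : A.neg (A.neg x) = x := A.imp_involutive x

lemma le_sup_left' (x y : X) : A.imp x (A.sup x y) = A.one := by
  rw [sup, A.exchange, A.imp_self]

lemma imp_neg_comm (x y : X) : A.imp x (A.neg y) = A.imp y (A.neg x) :=
  A.exchange x y A.zero

lemma neg_imp_comm (x y : X) : A.imp (A.neg x) y = A.imp (A.neg y) x := by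
  have h := A.imp_neg_comm (A.neg x) (A.neg y)
  rwa [neg_neg', neg_neg'] at h

lemma imp_imp_odot (x y : X) : A.imp x (A.imp y (A.odot x y)) = A.one := by
  rw [odot, A.imp_neg_comm y]
  exact A.le_sup_left' x (A.neg y)

lemma odot_imp_le (x y : X) : A.le (A.odot x (A.imp x y)) y := by
  rw [le, odot, neg_imp_comm, A.exchange, neg_imp_comm, neg_neg']
  exact A.le_sup_left' x y

/-- Upward closure for `≤` amounts to closure under `x ↦ x ∪ y` for every `y`. -/
lemma upward_iff_sup (F : Set X) :
    (∀ x ∈ F, ∀ y : X, A.le x y → y ∈ F) ↔ (∀ x ∈ F, ∀ y : X, A.sup x y ∈ F) := by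
  refine ⟨fun h x hx y => h x hx _ (A.le_sup_left' x y), fun h x hx y hxy => ?_⟩
  have hs := h x hx y
  rwa [sup, show A.imp x y = A.one from hxy, A.one_imp] at hs

lemma isDS_iff (F : Set X) :
    A.IsDS F ↔ (F.Nonempty ∧ (∀ x ∈ F, ∀ y ∈ F, A.odot x y ∈ F) ∧
      (∀ x ∈ F, ∀ y : X, A.le x y → y ∈ F)) := by
  constructor
  · rintro ⟨h1, hmp⟩
    have up : ∀ x ∈ F, ∀ y : X, A.le x y → y ∈ F := fun x hx y hxy =>
      hmp x y hx ((show A.imp x y = A.one from hxy) ▸ h1)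
    exact ⟨⟨_, h1⟩, fun x hx y hy => hmp y _ hy (up x hx _ (A.imp_imp_odot x y)), up⟩
  · rintro ⟨⟨a, ha⟩, hodot, up⟩
    exact ⟨up a ha _ (A.imp_one a), fun x y hx hxy =>
      up _ (hodot x hx _ hxy) y (A.odot_imp_le x y)⟩

end InvBE

/-- `F` is a deductive system iff it is nonempty and satisfies (F₁) and (F₄),
iff it is nonempty and satisfies (F₁) and (F₅). -/
theorem stmt_16 {X : Type*} (A : InvBE X) (hA : A.IOM) :
    ∀ F : Set X,
      (A.IsDS F ↔
        (F.Nonempty ∧ (∀ x ∈ F, ∀ y ∈ F, A.odot x y ∈ F) ∧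
          (∀ x ∈ F, ∀ y : X, A.le x y → y ∈ F))) ∧
      (A.IsDS F ↔
        (F.Nonempty ∧ (∀ x ∈ F, ∀ y ∈ F, A.odot x y ∈ F) ∧
          (∀ x ∈ F, ∀ y : X, A.sup x y ∈ F))) := by
  exact fun F => ⟨A.isDS_iff F, by rw [← A.upward_iff_sup F]; exact A.isDS_iff F⟩
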